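/- Let ℓ, c ∈ ℕ and n = ℓ·c + 1. Let G be the directed graph with nodes v_{−n},…,v_n and edge relation E = {(v_i,v_j) : i > j}, let H = gad(G), and let H' be the undirected labelled graph obtained from H by deleting the edges {v¹_{v_1}, v²_e} and {v³_e, v¹_{v_{−1}}} and adding the edges {v¹_{v_{−1}}, v²_e} and {v³_e, v¹_{v_1}}, where e = (v_1, v_{−1}). Then H is isomorphic to the gadgetisation of a strict linear order, H' is not isomorphic to the gadgetisation of any strict linear order, and for every node u of H, W^ℓ_c(u) computed in H equals W^ℓ_c of the corresponding node of H' computed in H'. -/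

import Mathlib

/-- A strict linear order on a type `V`: an irreflexive, transitive and total
binary relation. -/
def IsStrictLinearOrderRel {V : Type} (E : V → V → Prop) : Prop :=
  (∀ v, ¬ E v v) ∧ (∀ u v w, E u v → E v w → E u w) ∧ (∀ u v : V, u ≠ v → E u v ∨ E v u)

/-- Vertices of the gadgetisation of a directed graph `(V, E)`: a node `v¹_u` for every
`u : V` (left summand) and, for every edge `e` of `E`, a node `v²_e` (right summand with
second component `false`) and a node `v³_e` (second component `true`). -/
def GadV {V : Type} (E : V → V → Prop) : Type :=
  V ⊕ ({p : V × V // E p.1 p.2} × Bool)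

/-- The (symmetric) adjacency relation of the gadgetisation: every edge `(u,w)` of the
original graph is replaced by the undirected path `v¹_u — v²_{(u,w)} — v³_{(u,w)} — v¹_w`. -/
def gadAdj {V : Type} (E : V → V → Prop) : GadV E → GadV E → Prop
  | Sum.inl u, Sum.inr (e, b) => (b = false ∧ e.val.1 = u) ∨ (b = true ∧ e.val.2 = u)
  | Sum.inr (e, b), Sum.inl u => (b = false ∧ e.val.1 = u) ∨ (b = true ∧ e.val.2 = u)
  | Sum.inr (e, b), Sum.inr (e', b') => e = e' ∧ b ≠ b'
  | Sum.inl _, Sum.inl _ => False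

/-- The labelling of the gadgetisation: `v¹`-nodes get label `(1,0,0)`, `v²`-nodes get
`(0,1,0)` and `v³`-nodes get `(0,0,1)`. -/
def gadLab {V : Type} (E : V → V → Prop) : GadV E → Fin 3 → Bool
  | Sum.inl _ => fun i => decide (i = 0)
  | Sum.inr (_, false) => fun i => decide (i = 1)
  | Sum.inr (_, true) => fun i => decide (i = 2)

noncomputable instance GadV.fintype {V : Type} [Fintype V] (E : V → V → Prop) :
    Fintype (GadV E) := by
  classical
  unfold GadV
  infer_instance

/-- An isomorphism of labelled graphs: an edge-preserving and label-preserving bijection. -/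
def IsoLabGraph {V₁ V₂ : Type} {d : ℕ} (E₁ : V₁ → V₁ → Prop) (lab₁ : V₁ → Fin d → Bool)
    (E₂ : V₂ → V₂ → Prop) (lab₂ : V₂ → Fin d → Bool) : Prop :=
  ∃ f : V₁ ≃ V₂, (∀ u v, E₁ u v ↔ E₂ (f u) (f v)) ∧ ∀ v, lab₁ v = lab₂ (f v)

/-- `(W, EH, labH)` is isomorphic to the gadgetisation of some (finite) strict linear
order. -/
def IsGadLin {W : Type} (EH : W → W → Prop) (labH : W → Fin 3 → Bool) : Prop :=
  ∃ (U : Type) (_ : Fintype U) (R : U → U → Prop),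
    IsStrictLinearOrderRel R ∧ IsoLabGraph EH labH (gadAdj R) (gadLab R)

/-- A gadgetised path from `u` to `z` via `w` (a `P₂` node) and `v` (a `P₃` node). -/
def GadPath {V : Type} (E : V → V → Prop) (lab : V → Fin 3 → Bool) (u w v z : V) : Prop :=
  lab u 0 = true ∧ lab w 1 = true ∧ lab v 2 = true ∧ lab z 0 = true ∧
    E u w ∧ E w v ∧ E v z

/-- There is a gadgetised edge from `u` to `z`. -/
def GadEdge {V : Type} (E : V → V → Prop) (lab : V → Fin 3 → Bool) (u z : V) : Prop :=
  ∃ w v, GadPath E lab u w v z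

/-- Condition φ₁: every node satisfies exactly one of `P₁, P₂, P₃`. -/
def phi1 {V : Type} (lab : V → Fin 3 → Bool) : Prop :=
  ∀ v : V,
    (lab v 0 = true ∧ lab v 1 = false ∧ lab v 2 = false) ∨
    (lab v 0 = false ∧ lab v 1 = true ∧ lab v 2 = false) ∨
    (lab v 0 = false ∧ lab v 1 = false ∧ lab v 2 = true)

/-- Condition φ₂: every `P₂`-node has exactly two neighbours, exactly one of them a
`P₁`-node and exactly one a `P₃`-node; every `P₃`-node has exactly two neighbours, exactly
one a `P₁`-node and exactly one a `P₂`-node; and no two `P₁`-nodes are adjacent. -/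
def phi2 {V : Type} [Fintype V] (E : V → V → Prop) (lab : V → Fin 3 → Bool) : Prop :=
  (∀ v : V, lab v 1 = true →
    Nat.card {w | E v w} = 2 ∧ Nat.card {w | E v w ∧ lab w 0 = true} = 1 ∧
      Nat.card {w | E v w ∧ lab w 2 = true} = 1) ∧
  (∀ v : V, lab v 2 = true →
    Nat.card {w | E v w} = 2 ∧ Nat.card {w | E v w ∧ lab w 0 = true} = 1 ∧
      Nat.card {w | E v w ∧ lab w 1 = true} = 1) ∧
  (∀ u v : V, lab u 0 = true → lab v 0 = true → ¬ E u v)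

/-- Condition φ₃: between any two distinct `P₁`-nodes there is exactly one gadgetised edge
in total (from `u` to `z` or from `z` to `u`). -/
def phi3 {V : Type} [Fintype V] (E : V → V → Prop) (lab : V → Fin 3 → Bool) : Prop :=
  ∀ u z : V, lab u 0 = true → lab z 0 = true → u ≠ z →
    Nat.card {p : V × V | GadPath E lab u p.1 p.2 z} +
      Nat.card {p : V × V | GadPath E lab z p.1 p.2 u} = 1

/-- Condition φ₄: there is no triangle of gadgetised edges. -/
def phi4 {V : Type} (E : V → V → Prop) (lab : V → Fin 3 → Bool) : Prop :=
  ¬ ∃ u v w : V, GadEdge E lab u v ∧ GadEdge E lab v w ∧ GadEdge E lab w u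

/-- `N₂ u`: the number of neighbours of `u` satisfying `P₂`. -/
noncomputable def N2 {V : Type} [Fintype V] (E : V → V → Prop) (lab : V → Fin 3 → Bool)
    (u : V) : ℕ :=
  Nat.card {w | E u w ∧ lab w 1 = true}

/-- Condition ψ: for all `0 ≤ i < j < |P₁|` there are `P₁`-nodes `u, w` with `N₂ u = j`,
`N₂ w = i` and a gadgetised edge from `u` to `w`. -/
def psiCond {V : Type} [Fintype V] (E : V → V → Prop) (lab : V → Fin 3 → Bool) : Prop :=
  ∀ i j : ℕ, i < j → j < Nat.card {v : V | lab v 0 = true} →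
    ∃ u w : V, lab u 0 = true ∧ lab w 0 = true ∧
      N2 E lab u = j ∧ N2 E lab w = i ∧ GadEdge E lab u w

/-- The multiset `⟦f w : w ∈ V, p w⟧` of values of `f` on the elements satisfying `p`. -/
noncomputable def msetOf {V α : Type} [Fintype V] (p : V → Prop) (f : V → α) : Multiset α :=
  letI := Classical.decPred p
  ((Finset.univ.filter p).val.map f)

/-- Truncate every multiplicity in a multiset to at most `c` (the `c`-bounded multiset). -/
noncomputable def trunc {α : Type} (c : ℕ) (M : Multiset α) : Multiset α :=
  letI := Classical.decEq α
  M.toFinset.val.bind fun a => Multiset.replicate (min c (M.count a)) a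

/-- The type of colours of the (bounded) Weisfeiler–Leman algorithm after `ℓ` rounds, for
graphs of dimension `d`: a colour of round `ℓ+1` is a tuple of a colour of round `ℓ`
and four multisets of colours of round `ℓ`. -/
def WLC (d : ℕ) : ℕ → Type
  | 0 => Fin d → Bool
  | (ℓ+1) => WLC d ℓ × Multiset (WLC d ℓ) × Multiset (WLC d ℓ) × Multiset (WLC d ℓ) ×
      Multiset (WLC d ℓ)

/-- The `c`-bounded Weisfeiler–Leman colouring `W^ℓ_c` on the directed labelled graph
`(V, E, lab)`:  `W^0_c(v) = lab v` and `W^{ℓ+1}_c(v)` is the tuple of `W^ℓ_c(v)` and the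
`c`-bounded multisets of the previous colours over `←N(v)∩→N(v)`, `←N(v)∖→N(v)`,
`→N(v)∖←N(v)` and `V∖(N(v)∪{v})`. -/
noncomputable def WL {d : ℕ} {V : Type} [Fintype V] (E : V → V → Prop)
    (lab : V → Fin d → Bool) (c : ℕ) : (ℓ : ℕ) → V → WLC d ℓ
  | 0, v => lab v
  | (ℓ+1), v =>
      (WL E lab c ℓ v,
       trunc c (msetOf (fun w => E w v ∧ E v w) (WL E lab c ℓ)),
       trunc c (msetOf (fun w => E w v ∧ ¬ E v w) (WL E lab c ℓ)),
       trunc c (msetOf (fun w => E v w ∧ ¬ E w v) (WL E lab c ℓ)),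
       trunc c (msetOf (fun w => ¬ (E w v ∨ E v w) ∧ w ≠ v) (WL E lab c ℓ)))

/-- The vertex set `{v_{-n}, …, v_n}`, identified with the integer interval `[-n, n]`. -/
abbrev IntNode (n : ℕ) : Type := {i : ℤ // i ∈ Finset.Icc (-(n : ℤ)) (n : ℤ)}

/-!
Reversing an edge of a strict linear order that skips some vertex creates a directed triangle, and
the gadgetisation of a strict linear order has no triangle of gadgetised edges.

Weisfeiler–Leman does not notice the reversal if both ends of the edge lie deep inside the order.
Call the set of vertices that have at least `k * c` vertices on either side the `k`-th core, and
merge it into a single point. By induction on `k`, the colour of a node after `k` rounds depends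
only on its kind and on the merged ends of its vertex or edge, and it is the same in both graphs.
Indeed a vertex of the `(k + 1)`-st core has at least `c` successors and at least `c` predecessors
in the `k`-th core outside the `(k + 1)`-st, so its counts of fully merged gadget nodes are
saturated, reversed edge or not; and its edges to vertices outside the `k`-th core are the same as
for all other vertices of the `(k + 1)`-st core.
-/

section Multiset

variable {α β V T : Type}

theorem count_trunc [DecidableEq α] (c : ℕ) (M : Multiset α) (a : α) :
    (trunc c M).count a = min c (M.count a) := by
  have hM : trunc c M = M.toFinset.val.bind fun b => Multiset.replicate (min c (M.count b)) b := by
    unfold trunc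
    congr!
  have hsum : (trunc c M).count a =
      ∑ b ∈ M.toFinset, if b = a then min c (M.count b) else 0 := by
    simp only [hM, Multiset.count_bind, Multiset.count_replicate]
    rfl
  by_cases ha : a ∈ M <;> simp [hsum, Finset.sum_ite_eq', ha]

theorem trunc_eq_trunc_iff [DecidableEq α] {c : ℕ} {M N : Multiset α} :
    trunc c M = trunc c N ↔ ∀ a, min c (M.count a) = min c (N.count a) := by
  simp only [Multiset.ext, count_trunc]

theorem min_sum_congr {c : ℕ} {s : Finset α} {f g : α → ℕ}
    (h : ∀ i ∈ s, min c (f i) = min c (g i)) :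
    min c (∑ i ∈ s, f i) = min c (∑ i ∈ s, g i) := by
  classical
  induction s using Finset.induction_on with
  | empty => rfl
  | insert a s ha ih =>
    have ha' := h a (Finset.mem_insert_self a s)
    have hs := ih fun i hi => h i (Finset.mem_insert_of_mem hi)
    rw [Finset.sum_insert ha, Finset.sum_insert ha]
    omega

theorem count_map_eq_sum [DecidableEq α] [DecidableEq β] (g : α → β) {M : Multiset α}
    {s : Finset α} (hs : M.toFinset ⊆ s) (b : β) :
    (M.map g).count b = ∑ a ∈ s, if b = g a then M.count a else 0 := by
  rw [Multiset.count_map, ← Multiset.sum_count_eq_card (s := s)]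
  · simp only [Multiset.count_filter]
  · exact fun a ha => hs (Multiset.mem_toFinset.2 (Multiset.mem_of_mem_filter ha))

theorem trunc_map_congr {c : ℕ} {M N : Multiset α} (h : trunc c M = trunc c N) (g : α → β) :
    trunc c (M.map g) = trunc c (N.map g) := by
  classical
  rw [trunc_eq_trunc_iff] at h ⊢
  intro b
  rw [count_map_eq_sum g (Finset.subset_union_left (s₂ := N.toFinset)) b,
    count_map_eq_sum g (Finset.subset_union_right (s₁ := M.toFinset)) b]
  refine min_sum_congr fun a _ => ?_
  split_ifs
  · exact h a
  · rfl

/-- The number of elements of `p` that `τ` colours with `t`. -/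
noncomputable def colourCount (τ : V → T) (p : V → Prop) (t : T) : ℕ :=
  {w | p w ∧ τ w = t}.ncard

theorem count_msetOf [Fintype V] [DecidableEq T] (p : V → Prop) (τ : V → T) (t : T) :
    (msetOf p τ).count t = colourCount τ p t := by
  classical
  rw [msetOf, Multiset.count_map, ← Finset.filter_val, Finset.card_val, Finset.filter_filter,
    colourCount, Set.ncard_eq_toFinset_card']
  congr 1
  ext w
  simp [eq_comm]

theorem msetOf_comp [Fintype V] (p : V → Prop) (g : T → α) (τ : V → T) :
    msetOf p (g ∘ τ) = (msetOf p τ).map g := by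
  rw [msetOf, msetOf, Multiset.map_map]

theorem trunc_msetOf_congr [Fintype V] {c : ℕ} {τ : V → T} {f : V → α} {p q : V → Prop}
    (hf : f.FactorsThrough τ)
    (h : ∀ t, min c (colourCount τ p t) = min c (colourCount τ q t)) :
    trunc c (msetOf p f) = trunc c (msetOf q f) := by
  classical
  rcases isEmpty_or_nonempty V with _ | ⟨⟨v⟩⟩
  · rw [Subsingleton.elim p q]
  · have : Nonempty α := ⟨f v⟩
    obtain ⟨g, rfl⟩ := (Function.factorsThrough_iff f).1 hf
    rw [msetOf_comp, msetOf_comp]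
    refine trunc_map_congr (trunc_eq_trunc_iff.2 fun t => ?_) g
    rw [count_msetOf, count_msetOf]
    exact h t

end Multiset

section WeisfeilerLeman

variable {V T : Type} {A A' : V → V → Prop}

theorem WL_succ_eq [Fintype V] {d c k : ℕ} {lab : V → Fin d → Bool} [Std.Symm A] (v : V) :
    WL A lab c (k + 1) v =
      (WL A lab c k v, trunc c (msetOf (A v) (WL A lab c k)),
        trunc c (msetOf (fun _ => False) (WL A lab c k)),
        trunc c (msetOf (fun _ => False) (WL A lab c k)),
        trunc c (msetOf (fun w => ¬ A v w ∧ w ≠ v) (WL A lab c k))) := by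
  have hv (w : V) : A w v ↔ A v w := comm_of A
  simp only [WL, hv, and_self, and_not_self_iff, or_self]
  rfl

/-- One Weisfeiler–Leman round with multiplicities bounded by `c`, started from the colouring `τ`,
does not tell `x` in the undirected graph `A` from `y` in `A'`: up to `c`, every colour occurs
equally often among their neighbours and among their non-neighbours. -/
def IndistinguishableUpTo (c : ℕ) (τ : V → T) (A A' : V → V → Prop) (x y : V) : Prop :=
  ∀ t, min c (colourCount τ (A x) t) = min c (colourCount τ (A' y) t) ∧
    min c (colourCount τ (fun w => ¬ A x w ∧ w ≠ x) t) =
      min c (colourCount τ (fun w => ¬ A' y w ∧ w ≠ y) t)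

theorem WL_eq_of_indistinguishableUpTo [Fintype V] [Std.Symm A] [Std.Symm A'] {d c ℓ : ℕ}
    {lab : V → Fin d → Bool} (τ : ℕ → V → T)
    (hlab : ∀ x y, τ 0 x = τ 0 y → lab x = lab y)
    (hτ : ∀ k x y, τ (k + 1) x = τ (k + 1) y → τ k x = τ k y)
    (hstep : ∀ k < ℓ, ∀ x y, τ (k + 1) x = τ (k + 1) y →
      IndistinguishableUpTo c (τ k) A A' x y)
    {x y : V} (hxy : τ ℓ x = τ ℓ y) :
    WL A lab c ℓ x = WL A' lab c ℓ y := by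
  induction ℓ generalizing x y with
  | zero => exact hlab x y hxy
  | succ k ih =>
    have ih' : ∀ x y, τ k x = τ k y → WL A lab c k x = WL A' lab c k y :=
      fun x y => ih fun i hi => hstep i (hi.trans k.lt_succ_self)
    have hWL : WL A' lab c k = WL A lab c k := funext fun v => (ih' v v rfl).symm
    have hfac : (WL A lab c k).FactorsThrough (τ k) := fun u v huv => hWL ▸ ih' u v huv
    have hk := hstep k k.lt_succ_self x y hxy
    rw [WL_succ_eq, WL_succ_eq, hWL, hfac (hτ k x y hxy),
      trunc_msetOf_congr hfac fun t => (hk t).1, trunc_msetOf_congr hfac fun t => (hk t).2]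

theorem colourCount_nonadj_add [Finite V] [DecidableEq T] [Std.Irrefl A] (τ : V → T) (v : V)
    (t : T) :
    colourCount τ (fun w => ¬ A v w ∧ w ≠ v) t + colourCount τ (A v) t +
      (if τ v = t then 1 else 0) = colourCount τ (fun _ => True) t := by
  have hself : (if τ v = t then 1 else 0) = colourCount τ (fun w => w = v) t := by
    have hset : {w | w = v ∧ τ w = t} = if τ v = t then {v} else ∅ := by
      ext w
      split_ifs <;> simp <;> grind
    rw [colourCount, hset]
    split_ifs <;> simp
  unfold colourCount at hself ⊢
  rw [hself, ← Set.ncard_union_eq, ← Set.ncard_union_eq]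
  · congr 1
    ext w
    simp only [Set.mem_union, Set.mem_ofPred_eq]
    tauto
  · rw [Set.disjoint_left]
    rintro w (hw | hw) ⟨rfl, -⟩
    · exact hw.1.2 rfl
    · exact irrefl_of A w hw.1
  · exact Set.disjoint_left.2 fun w hw hw' => hw.1.1 hw'.1

theorem colourCount_nonadj_eq [Finite V] [Std.Irrefl A] [Std.Irrefl A'] {τ : V → T}
    {x y : V} (hxy : τ x = τ y) {t : T} (h : colourCount τ (A x) t = colourCount τ (A' y) t) :
    colourCount τ (fun w => ¬ A x w ∧ w ≠ x) t =
      colourCount τ (fun w => ¬ A' y w ∧ w ≠ y) t := by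
  classical
  have hx := colourCount_nonadj_add (A := A) τ x t
  have hy := colourCount_nonadj_add (A := A') τ y t
  rw [hxy, h] at hx
  omega

theorem min_colourCount_eq_of_colourCount_eq [Finite V] [Std.Irrefl A] [Std.Irrefl A'] {c : ℕ}
    {τ : V → T} {x y : V} (hxy : τ x = τ y) {t : T}
    (h : colourCount τ (A x) t = colourCount τ (A' y) t) :
    min c (colourCount τ (A x) t) = min c (colourCount τ (A' y) t) ∧
      min c (colourCount τ (fun w => ¬ A x w ∧ w ≠ x) t) =
        min c (colourCount τ (fun w => ¬ A' y w ∧ w ≠ y) t) :=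
  ⟨congrArg (min c) h, congrArg (min c) (colourCount_nonadj_eq hxy h)⟩

end WeisfeilerLeman

section Gadget

variable {V ι : Type} {ends ends' : ι → Bool → V} {K K' : Set V} {c : ℕ}

/-- The gadgetisation of the directed multigraph with edge set `ι` in which the edge `e` goes from
`ends e false` to `ends e true`. As in `GadV`, the node `inr (e, b)` is the one next to the end
`ends e b` on the path that replaces `e`. -/
def gadgetAdj (ends : ι → Bool → V) : V ⊕ ι × Bool → V ⊕ ι × Bool → Prop
  | Sum.inl u, Sum.inr (e, b) => ends e b = u
  | Sum.inr (e, b), Sum.inl u => ends e b = u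
  | Sum.inr (e, b), Sum.inr (e', b') => e = e' ∧ b ≠ b'
  | Sum.inl _, Sum.inl _ => False

instance : Std.Symm (gadgetAdj ends) where
  symm
    | Sum.inl _, Sum.inr _, h => h
    | Sum.inr _, Sum.inl _, h => h
    | Sum.inr _, Sum.inr _, h => ⟨h.1.symm, h.2.symm⟩

instance : Std.Irrefl (gadgetAdj ends) where
  irrefl
    | Sum.inr _, h => h.2 rfl

theorem gadgetAdj_inr_iff {e : ι} {b : Bool} {w : V ⊕ ι × Bool} :
    gadgetAdj ends (Sum.inr (e, b)) w ↔ w = Sum.inl (ends e b) ∨ w = Sum.inr (e, !b) := by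
  rcases w with u | ⟨e', b'⟩
  · simp [gadgetAdj, eq_comm]
  · cases b <;> cases b' <;> simp [gadgetAdj, eq_comm]

open Classical in
/-- The multigraph obtained by reversing the edge `e₀`. -/
noncomputable def reverseEdge (ends : ι → Bool → V) (e₀ e : ι) (b : Bool) : V :=
  if e = e₀ then ends e !b else ends e b

theorem reverseEdge_self (e : ι) (b : Bool) : reverseEdge ends e e b = ends e !b :=
  if_pos rfl

theorem reverseEdge_of_ne {e e₀ : ι} (he : e ≠ e₀) : reverseEdge ends e₀ e = ends e :=
  funext fun _ => if_neg he

theorem gadgetAdj_reverseEdge_iff {e₀ : ι} (a b : V ⊕ ι × Bool) :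
    gadgetAdj (reverseEdge ends e₀) a b ↔
      ((gadgetAdj ends a b ∧
          ¬ ((a = Sum.inl (ends e₀ false) ∧ b = Sum.inr (e₀, false)) ∨
             (b = Sum.inl (ends e₀ false) ∧ a = Sum.inr (e₀, false)) ∨
             (a = Sum.inr (e₀, true) ∧ b = Sum.inl (ends e₀ true)) ∨
             (b = Sum.inr (e₀, true) ∧ a = Sum.inl (ends e₀ true)))) ∨
        ((a = Sum.inl (ends e₀ true) ∧ b = Sum.inr (e₀, false)) ∨
         (b = Sum.inl (ends e₀ true) ∧ a = Sum.inr (e₀, false)) ∨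
         (a = Sum.inr (e₀, true) ∧ b = Sum.inl (ends e₀ false)) ∨
         (b = Sum.inr (e₀, true) ∧ a = Sum.inl (ends e₀ false)))) := by
  rcases a with u | ⟨e, _ | _⟩ <;> rcases b with v | ⟨e', _ | _⟩ <;>
    simp only [gadgetAdj, reverseEdge] <;> grind

open Classical in
/-- The quotient map that collapses the set `K` to the single point `none`. -/
noncomputable def collapse (K : Set V) (x : V) : Option V :=
  if x ∈ K then none else some x

theorem collapse_eq_none_iff {x : V} : collapse K x = none ↔ x ∈ K := by
  simp [collapse]

theorem collapse_eq_collapse_iff {x y : V} :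
    collapse K x = collapse K y ↔ x = y ∨ x ∈ K ∧ y ∈ K := by
  unfold collapse
  grind

theorem collapse_eq_of_subset (hK : K ⊆ K') {x y : V} (h : collapse K x = collapse K y) :
    collapse K' x = collapse K' y := by
  rw [collapse_eq_collapse_iff] at h ⊢
  exact h.imp_right (And.imp (@hK x) (@hK y))

/-- The colouring of the nodes of a gadgetisation by their kind and by the ends of the underlying
vertex or edge, where the vertices in `K` are not told apart. -/
noncomputable def gadgetColour (ends : ι → Bool → V) (K : Set V) :
    V ⊕ ι × Bool → Option V ⊕ (Bool → Option V) × Bool :=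
  Sum.map (collapse K) (Prod.map (fun e b => collapse K (ends e b)) id)

theorem gadgetColour_eq_of_subset (hK : K ⊆ K') :
    ∀ {x y : V ⊕ ι × Bool}, gadgetColour ends K x = gadgetColour ends K y →
      gadgetColour ends K' x = gadgetColour ends K' y
  | Sum.inl _, Sum.inl _, h => congrArg Sum.inl (collapse_eq_of_subset hK (Sum.inl.inj h))
  | Sum.inr (e, b), Sum.inr (e', b'), h => by
    simp only [gadgetColour, Sum.map_inr, Prod.map_apply, Sum.inr.injEq, Prod.mk.injEq,
      funext_iff] at h ⊢
    exact ⟨fun i => collapse_eq_of_subset hK (h.1 i), h.2⟩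

theorem colourCount_gadgetAdj_inl_inl (x : V) (s : Option V) :
    colourCount (gadgetColour ends K) (gadgetAdj ends (Sum.inl x)) (Sum.inl s) = 0 := by
  have hempty : {w | gadgetAdj ends (Sum.inl x) w ∧ gadgetColour ends K w = Sum.inl s} = ∅ := by
    refine Set.eq_empty_of_forall_notMem ?_
    rintro (u | p) ⟨hadj, hcol⟩
    · exact hadj
    · cases hcol
  rw [colourCount, hempty, Set.ncard_empty]

theorem colourCount_gadgetAdj_inl_inr {x : V} (hx : x ∈ K) (s : Bool → Option V) (b : Bool) :
    colourCount (gadgetColour ends K) (gadgetAdj ends (Sum.inl x)) (Sum.inr (s, b)) =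
      {e | ends e b = x ∧ ends e (!b) ∈ {v | s b = none ∧ collapse K v = s !b}}.ncard := by
  have hinj : Function.Injective fun e : ι => (Sum.inr (e, b) : V ⊕ ι × Bool) :=
    fun e e' h => (Prod.mk.inj (Sum.inr.inj h)).1
  rw [colourCount, ← Set.ncard_image_of_injective _ hinj]
  congr 1
  ext (u | ⟨e, b'⟩)
  · simp [gadgetAdj]
  · have hnone := collapse_eq_none_iff.2 hx
    simp only [gadgetAdj, gadgetColour, Sum.map_inr, Prod.map_apply, id, Sum.inr.injEq,
      Prod.mk.injEq, funext_iff, Bool.forall_bool' b, Set.mem_ofPred_eq, Set.mem_image]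
    grind

theorem colourCount_pair {X T : Type} [DecidableEq T] (τ : X → T) {u v : X} (huv : u ≠ v) (t : T) :
    colourCount τ (fun w => w = u ∨ w = v) t =
      (if τ u = t then 1 else 0) + (if τ v = t then 1 else 0) := by
  classical
  have hset : {w | (w = u ∨ w = v) ∧ τ w = t} = (({u, v} : Finset X).filter (τ · = t) : Set X) := by
    ext w
    simp
  rw [colourCount, hset, Set.ncard_coe_finset, Finset.card_filter, Finset.sum_pair huv]

open Classical in
theorem colourCount_gadgetAdj_inr (e : ι) (b : Bool) (t : Option V ⊕ (Bool → Option V) × Bool) :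
    colourCount (gadgetColour ends K) (gadgetAdj ends (Sum.inr (e, b))) t =
      (if Sum.inl (collapse K (ends e b)) = t then 1 else 0) +
        (if Sum.inr (fun i => collapse K (ends e i), !b) = t then 1 else 0) := by
  have hadj : gadgetAdj ends (Sum.inr (e, b)) =
      fun w => w = Sum.inl (ends e b) ∨ w = Sum.inr (e, !b) :=
    funext fun w => propext gadgetAdj_inr_iff
  rw [hadj, colourCount_pair _ Sum.inl_ne_inr]
  rfl

/-- The multigraphs `ends` and `ends'` differ only in edges between vertices of `K`. -/
def AgreeOutside (K : Set V) (ends ends' : ι → Bool → V) : Prop :=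
  ∀ e, ends e = ends' e ∨ ∀ b, ends e b ∈ K ∧ ends' e b ∈ K

namespace AgreeOutside

theorem mono (h : AgreeOutside K ends ends') (hK : K ⊆ K') : AgreeOutside K' ends ends' :=
  fun e => (h e).imp_right fun he b => ⟨hK (he b).1, hK (he b).2⟩

theorem gadgetColour_eq (h : AgreeOutside K ends ends') :
    gadgetColour ends' K = gadgetColour ends K := by
  have hends (e : ι) (b : Bool) : collapse K (ends' e b) = collapse K (ends e b) :=
    collapse_eq_collapse_iff.2 <| (h e).imp (fun he => congrFun he.symm b) fun he => (he b).symm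
  simp only [gadgetColour, hends]

theorem gadgetAdj_inl_eq (h : AgreeOutside K ends ends') {x : V} (hx : x ∉ K) :
    gadgetAdj ends (Sum.inl x) = gadgetAdj ends' (Sum.inl x) := by
  ext (u | ⟨e, b⟩)
  · rfl
  · simp only [gadgetAdj]
    rcases h e with he | he
    · rw [he]
    · exact iff_of_false (fun hb => hx (hb ▸ (he b).1)) fun hb => hx (hb ▸ (he b).2)

theorem setOf_ends_eq (h : AgreeOutside K ends ends') {S : Set V} (hS : Disjoint K S) (x : V)
    (b : Bool) :
    {e | ends e b = x ∧ ends e (!b) ∈ S} = {e | ends' e b = x ∧ ends' e (!b) ∈ S} := by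
  ext e
  rcases h e with he | he
  · simp only [Set.mem_ofPred_eq, he]
  · exact iff_of_false (fun hb => Set.disjoint_left.1 hS (he _).1 hb.2)
      fun hb => Set.disjoint_left.1 hS (he _).2 hb.2

end AgreeOutside

theorem agreeOutside_reverseEdge {e₀ : ι} (h : ∀ b, ends e₀ b ∈ K) :
    AgreeOutside K ends (reverseEdge ends e₀) := by
  intro e
  by_cases he : e = e₀
  · subst he
    exact Or.inr fun b => ⟨h b, (reverseEdge_self e b).symm ▸ h !b⟩
  · exact Or.inl (reverseEdge_of_ne he).symm

/-- The vertices of `K` look alike from outside `K`, and each of them has at least `c` edges in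
either direction to vertices in `K' \ K`. Hence if only the vertices outside `K'` are told apart,
then one round of counting up to `c` does not tell apart the vertices of `K`. -/
structure IsCushioned (ends : ι → Bool → V) (c : ℕ) (K K' : Set V) : Prop where
  ncard_eq : ∀ x ∈ K, ∀ y ∈ K, ∀ S, Disjoint K S → ∀ b,
    {e | ends e b = x ∧ ends e (!b) ∈ S}.ncard = {e | ends e b = y ∧ ends e (!b) ∈ S}.ncard
  le_ncard : ∀ x ∈ K, ∀ b, c ≤ {e | ends e b = x ∧ ends e (!b) ∈ K' \ K}.ncard

namespace IsCushioned

theorem congr (h : IsCushioned ends c K K') (hends : AgreeOutside K ends ends') :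
    IsCushioned ends' c K K' where
  ncard_eq x hx y hy S hS b := by
    rw [← hends.setOf_ends_eq hS, ← hends.setOf_ends_eq hS]
    exact h.ncard_eq x hx y hy S hS b
  le_ncard x hx b := by
    rw [← hends.setOf_ends_eq Set.disjoint_sdiff_right]
    exact h.le_ncard x hx b

theorem le_colourCount_adj [Finite ι] (h : IsCushioned ends c K K') (hK : K ⊆ K') {x : V}
    (hx : x ∈ K) (b : Bool) :
    c ≤ colourCount (gadgetColour ends K') (gadgetAdj ends (Sum.inl x))
      (Sum.inr (fun _ => none, b)) := by
  rw [colourCount_gadgetAdj_inl_inr (hK hx)]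
  refine (h.le_ncard x hx b).trans (Set.ncard_le_ncard fun e he => ⟨he.1, rfl, ?_⟩)
  exact collapse_eq_none_iff.2 he.2.1

theorem le_colourCount_nonadj [Finite V] [Finite ι] (h : IsCushioned ends c K K') (hK : K ⊆ K')
    {x : V} (hx : x ∈ K) (b : Bool) :
    c ≤ colourCount (gadgetColour ends K') (fun w => ¬ gadgetAdj ends (Sum.inl x) w ∧ w ≠ Sum.inl x)
      (Sum.inr (fun _ => none, b)) := by
  -- On an edge from `x` to `K' \ K`, the gadget node next to the other end is not adjacent to `x`.
  refine (h.le_ncard x hx !b).trans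
    (Set.ncard_le_ncard_of_injOn (fun e => Sum.inr (e, b)) ?_ ?_)
  · rintro e ⟨hex, he⟩
    rw [Bool.not_not] at he
    refine ⟨⟨fun (hb : ends e b = x) => he.2 (hb ▸ hx), Sum.inr_ne_inl⟩, ?_⟩
    simp only [gadgetColour, Sum.map_inr, Prod.map_apply, id, Sum.inr.injEq, Prod.mk.injEq,
      and_true, funext_iff, collapse_eq_none_iff, Bool.forall_bool' b]
    exact ⟨he.1, hK (hex ▸ hx)⟩
  · exact fun e _ e' _ hee' => (Prod.mk.inj (Sum.inr.inj hee')).1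

theorem colourCount_eq (h : IsCushioned ends c K K') (hends : AgreeOutside K ends ends')
    (hK : K ⊆ K') {x y : V} (hx : x ∈ K) (hy : y ∈ K) {s : Bool → Option V}
    (hs : s ≠ fun _ => none) (b : Bool) :
    colourCount (gadgetColour ends K') (gadgetAdj ends (Sum.inl x)) (Sum.inr (s, b)) =
      colourCount (gadgetColour ends' K') (gadgetAdj ends' (Sum.inl y)) (Sum.inr (s, b)) := by
  have hdisj : Disjoint K {v | s b = none ∧ collapse K' v = s !b} := by
    refine Set.disjoint_left.2 fun v hv hsv => hs (funext ((Bool.forall_bool' b).2 ⟨hsv.1, ?_⟩))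
    exact hsv.2.symm.trans (collapse_eq_none_iff.2 (hK hv))
  rw [colourCount_gadgetAdj_inl_inr (hK hx), colourCount_gadgetAdj_inl_inr (hK hy),
    ← hends.setOf_ends_eq hdisj]
  exact h.ncard_eq x hx y hy _ hdisj b

theorem indistinguishableUpTo_inl [Finite V] [Finite ι] (h : IsCushioned ends c K K')
    (hends : AgreeOutside K ends ends') (hK : K ⊆ K') {x y : V} (hx : x ∈ K) (hy : y ∈ K) :
    IndistinguishableUpTo c (gadgetColour ends K') (gadgetAdj ends) (gadgetAdj ends')
      (Sum.inl x) (Sum.inl y) := by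
  have hcol := (hends.mono hK).gadgetColour_eq
  have hxy : gadgetColour ends K' (Sum.inl x) = gadgetColour ends K' (Sum.inl y) :=
    congrArg Sum.inl (collapse_eq_collapse_iff.2 (Or.inr ⟨hK hx, hK hy⟩))
  rintro (s | ⟨s, b⟩)
  · refine min_colourCount_eq_of_colourCount_eq hxy ?_
    rw [colourCount_gadgetAdj_inl_inl, ← hcol, colourCount_gadgetAdj_inl_inl]
  · by_cases hs : s = fun _ => none
    · subst hs
      have h' := h.congr hends
      constructor
      · rw [min_eq_left (h.le_colourCount_adj hK hx b), ← hcol,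
          min_eq_left (h'.le_colourCount_adj hK hy b)]
      · rw [min_eq_left (h.le_colourCount_nonadj hK hx b), ← hcol,
          min_eq_left (h'.le_colourCount_nonadj hK hy b)]
    · refine min_colourCount_eq_of_colourCount_eq hxy ?_
      rw [h.colourCount_eq hends hK hx hy hs, hcol]

theorem indistinguishableUpTo [Finite V] [Finite ι] (h : IsCushioned ends c K K')
    (hends : AgreeOutside K ends ends') (hK : K ⊆ K') {x y : V ⊕ ι × Bool}
    (hxy : gadgetColour ends K x = gadgetColour ends K y) :
    IndistinguishableUpTo c (gadgetColour ends K') (gadgetAdj ends) (gadgetAdj ends') x y := by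
  have hxy' := gadgetColour_eq_of_subset hK hxy
  rcases x with u | ⟨e, b⟩ <;> rcases y with v | ⟨e', b'⟩
  · rcases collapse_eq_collapse_iff.1 (Sum.inl.inj hxy) with rfl | ⟨hu, hv⟩
    · by_cases hu : u ∈ K
      · exact h.indistinguishableUpTo_inl hends hK hu hu
      · exact fun t => min_colourCount_eq_of_colourCount_eq hxy' (by rw [hends.gadgetAdj_inl_eq hu])
    · exact h.indistinguishableUpTo_inl hends hK hu hv
  · cases hxy
  · cases hxy
  · classical
    obtain ⟨hcol, rfl⟩ := Prod.mk.inj (Sum.inr.inj (hxy'.trans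
      (congrFun (hends.mono hK).gadgetColour_eq (Sum.inr (e', b'))).symm))
    refine fun t => min_colourCount_eq_of_colourCount_eq hxy' ?_
    rw [colourCount_gadgetAdj_inr, ← (hends.mono hK).gadgetColour_eq, colourCount_gadgetAdj_inr]
    simp only [funext_iff] at hcol
    simp only [hcol]
    rfl

end IsCushioned

theorem WL_gadgetAdj_eq [Finite V] [Finite ι] [Fintype (V ⊕ ι × Bool)] {d ℓ : ℕ}
    {lab : V ⊕ ι × Bool → Fin d → Bool} {K : ℕ → Set V} (hanti : Antitone K)
    (hcushion : ∀ k, IsCushioned ends c (K (k + 1)) (K k)) (hends : AgreeOutside (K ℓ) ends ends')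
    (hlab : ∀ x y, gadgetColour ends (K 0) x = gadgetColour ends (K 0) y → lab x = lab y)
    (x : V ⊕ ι × Bool) :
    WL (gadgetAdj ends) lab c ℓ x = WL (gadgetAdj ends') lab c ℓ x :=
  WL_eq_of_indistinguishableUpTo (fun k => gadgetColour ends (K k)) hlab
    (fun k _ _ => gadgetColour_eq_of_subset (hanti k.le_succ))
    (fun k hk _ _ => (hcushion k).indistinguishableUpTo
      (hends.mono (hanti (Nat.succ_le_of_lt hk))) (hanti k.le_succ)) rfl

end Gadget

section Core

variable {V : Type} {E : V → V → Prop} {c k : ℕ} {x y : V}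

theorem IsStrictLinearOrderRel.flip (hE : IsStrictLinearOrderRel E) :
    IsStrictLinearOrderRel (flip E) :=
  ⟨hE.1, fun u v w huv hvw => hE.2.1 w v u hvw huv, fun u v huv => (hE.2.2 u v huv).symm⟩

theorem isStrictLinearOrderRel_gt {α : Type} [LinearOrder α] :
    IsStrictLinearOrderRel fun x y : α => x > y :=
  ⟨lt_irrefl, fun _ _ _ huv hvw => hvw.trans huv, fun _ _ huv => huv.lt_or_gt.symm⟩

/-- The number of out-neighbours of a vertex of a directed graph, so that `outDegree (flip E)`
counts the in-neighbours. -/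
noncomputable def outDegree (E : V → V → Prop) (x : V) : ℕ :=
  {y | E x y}.ncard

/-- The vertices with at least `k * c` out-neighbours and at least `k * c` in-neighbours: in a
strict linear order, those that `k` rounds of counting up to `c` do not tell apart. -/
def core (E : V → V → Prop) (c k : ℕ) : Set V :=
  {x | k * c ≤ outDegree E x ∧ k * c ≤ outDegree (flip E) x}

theorem core_flip : core (flip E) c k = core E c k :=
  Set.ext fun _ => and_comm

theorem core_antitone : Antitone (core E c) := fun _ _ hk _ hx =>
  ⟨(Nat.mul_le_mul_right c hk).trans hx.1, (Nat.mul_le_mul_right c hk).trans hx.2⟩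

variable [Finite V] (hE : IsStrictLinearOrderRel E)
include hE

theorem outDegree_lt_outDegree (hxy : E x y) : outDegree E y < outDegree E x :=
  Set.ncard_lt_ncard ⟨fun z hyz => hE.2.1 x y z hxy hyz, fun h => hE.1 y (h hxy)⟩

theorem outDegree_injective : Function.Injective (outDegree E) := by
  intro x y hxy
  by_contra hne
  rcases hE.2.2 x y hne with h | h
  · exact (outDegree_lt_outDegree hE h).ne' hxy
  · exact (outDegree_lt_outDegree hE h).ne hxy

theorem image_outDegree_eq_Iio (x : V) : outDegree E '' {y | E x y} = Set.Iio (outDegree E x) := by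
  refine Set.eq_of_subset_of_ncard_le ?_ ?_
  · rintro _ ⟨y, hxy, rfl⟩
    exact outDegree_lt_outDegree hE hxy
  · rw [Set.ncard_Iio_nat, Set.ncard_image_of_injective _ (outDegree_injective hE)]
    rfl

theorem adj_of_notMem_core (hx : x ∈ core E c k) (hy : y ∈ core E c k) {z : V}
    (hz : z ∉ core E c k) (hxz : E x z) : E y z := by
  have hyz : y ≠ z := fun h => hz (h ▸ hy)
  refine (hE.2.2 y z hyz).resolve_right fun hzy => hz ⟨?_, ?_⟩
  · exact hy.1.trans (outDegree_lt_outDegree hE hzy).le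
  · exact hx.2.trans (outDegree_lt_outDegree hE.flip hxz).le

theorem ncard_adj_eq_of_disjoint_core (hx : x ∈ core E c k) (hy : y ∈ core E c k) {S : Set V}
    (hS : Disjoint (core E c k) S) : {z ∈ S | E x z}.ncard = {z ∈ S | E y z}.ncard := by
  congr 1
  ext z
  refine and_congr_right fun hz => ?_
  have hz' := Set.disjoint_right.1 hS hz
  exact ⟨adj_of_notMem_core hE hx hy hz', adj_of_notMem_core hE hy hx hz'⟩

theorem le_ncard_adj_core_diff (hx : x ∈ core E c (k + 1)) :
    c ≤ {z ∈ core E c k \ core E c (k + 1) | E x z}.ncard := by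
  have hsub : Set.Ico (k * c) ((k + 1) * c) ⊆
      outDegree E '' {z ∈ core E c k \ core E c (k + 1) | E x z} := by
    rintro j ⟨hkj, hjk⟩
    obtain ⟨z, hxz, rfl⟩ : j ∈ outDegree E '' {z | E x z} := by
      rw [image_outDegree_eq_Iio hE]
      exact hjk.trans_le hx.1
    have hz : k * c ≤ outDegree (flip E) z :=
      (core_antitone k.le_succ hx).2.trans (outDegree_lt_outDegree hE.flip hxz).le
    exact ⟨z, ⟨⟨⟨hkj, hz⟩, fun h => hjk.not_ge h.1⟩, hxz⟩, rfl⟩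
  calc c = (Set.Ico (k * c) ((k + 1) * c)).ncard := by
        rw [Set.ncard_Ico_nat, Nat.succ_mul, Nat.add_sub_cancel_left]
    _ ≤ _ := (Set.ncard_le_ncard hsub).trans (Set.ncard_image_le (Set.toFinite _))

end Core

section Gadgetisation

variable {V : Type} {E : V → V → Prop}

/-- The source (at `false`) and the target (at `true`) of an edge of a directed graph. -/
def edgeEnds (E : V → V → Prop) (e : {p : V × V // E p.1 p.2}) (b : Bool) : V :=
  bif b then e.val.2 else e.val.1

theorem gadAdj_eq : gadAdj E = gadgetAdj (edgeEnds E) := by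
  ext (u | ⟨e, b⟩) (v | ⟨e', b'⟩)
  · rfl
  · cases b' <;> simp [gadAdj, gadgetAdj, edgeEnds]
  · cases b <;> simp [gadAdj, gadgetAdj, edgeEnds]
  · rfl

theorem ncard_edgeEnds_false (x : V) (S : Set V) :
    {e | edgeEnds E e false = x ∧ edgeEnds E e true ∈ S}.ncard = {z ∈ S | E x z}.ncard := by
  refine Set.ncard_congr (fun e _ => e.val.2) ?_ ?_ ?_
  · rintro e ⟨rfl, he⟩
    exact ⟨he, e.property⟩
  · rintro e e' ⟨he, -⟩ ⟨he', -⟩ h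
    exact Subtype.ext (Prod.ext (he.trans he'.symm) h)
  · rintro z ⟨hz, hxz⟩
    exact ⟨⟨(x, z), hxz⟩, ⟨rfl, hz⟩, rfl⟩

theorem ncard_edgeEnds_true (x : V) (S : Set V) :
    {e | edgeEnds E e true = x ∧ edgeEnds E e false ∈ S}.ncard = {z ∈ S | E z x}.ncard := by
  refine Set.ncard_congr (fun e _ => e.val.1) ?_ ?_ ?_
  · rintro e ⟨rfl, he⟩
    exact ⟨he, e.property⟩
  · rintro e e' ⟨he, -⟩ ⟨he', -⟩ h
    exact Subtype.ext (Prod.ext h (he.trans he'.symm))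
  · rintro z ⟨hz, hzx⟩
    exact ⟨⟨(z, x), hzx⟩, ⟨rfl, hz⟩, rfl⟩

theorem isCushioned_core [Finite V] (hE : IsStrictLinearOrderRel E) (c k : ℕ) :
    IsCushioned (edgeEnds E) c (core E c (k + 1)) (core E c k) where
  ncard_eq x hx y hy S hS b := by
    cases b
    · simp only [Bool.not_false, ncard_edgeEnds_false]
      exact ncard_adj_eq_of_disjoint_core hE hx hy hS
    · simp only [Bool.not_true, ncard_edgeEnds_true]
      rw [← core_flip] at hx hy hS
      exact ncard_adj_eq_of_disjoint_core hE.flip hx hy hS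
  le_ncard x hx b := by
    cases b
    · simp only [Bool.not_false, ncard_edgeEnds_false]
      exact le_ncard_adj_core_diff hE hx
    · simp only [Bool.not_true, ncard_edgeEnds_true]
      rw [← core_flip] at hx
      simpa only [core_flip, flip] using le_ncard_adj_core_diff hE.flip hx

theorem gadLab_eq_of_gadgetColour_eq {K : Set V} :
    ∀ {x y : GadV E}, gadgetColour (edgeEnds E) K x = gadgetColour (edgeEnds E) K y →
      gadLab E x = gadLab E y
  | Sum.inl _, Sum.inl _, _ => rfl
  | Sum.inr (_, b), Sum.inr (_, b'), h => by
    obtain rfl : b = b' := congrArg Prod.snd (Sum.inr.inj h)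
    cases b <;> rfl

theorem WL_gadAdj_eq [Fintype V] (hE : IsStrictLinearOrderRel E) {c ℓ : ℕ}
    {ends : {p : V × V // E p.1 p.2} → Bool → V}
    (hends : AgreeOutside (core E c ℓ) (edgeEnds E) ends) (u : GadV E) :
    WL (gadAdj E) (gadLab E) c ℓ u = WL (V := GadV E) (gadgetAdj ends) (gadLab E) c ℓ u := by
  rw [gadAdj_eq]
  exact @WL_gadgetAdj_eq _ _ _ _ _ _ _ (GadV.fintype E) _ _ _ _ core_antitone
    (isCushioned_core hE c) hends (fun _ _ => gadLab_eq_of_gadgetColour_eq) u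

theorem isGadLin_gadAdj [Finite V] (hE : IsStrictLinearOrderRel E) :
    IsGadLin (gadAdj E) (gadLab E) :=
  ⟨V, Fintype.ofFinite V, E, hE, Equiv.refl _, fun _ _ => Iff.rfl, fun _ => rfl⟩

theorem gadEdge_gadgetAdj (ends : {p : V × V // E p.1 p.2} → Bool → V)
    (e : {p : V × V // E p.1 p.2}) :
    GadEdge (V := GadV E) (gadgetAdj ends) (gadLab E) (Sum.inl (ends e false))
      (Sum.inl (ends e true)) :=
  ⟨Sum.inr (e, false), Sum.inr (e, true), rfl, rfl, rfl, rfl, rfl, ⟨rfl, Bool.false_ne_true⟩, rfl⟩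

theorem exists_eq_inl_of_gadLab : ∀ {x : GadV E}, gadLab E x 0 = true → ∃ u, x = Sum.inl u
  | Sum.inl u, _ => ⟨u, rfl⟩
  | Sum.inr (_, false), h => (Bool.false_ne_true h).elim
  | Sum.inr (_, true), h => (Bool.false_ne_true h).elim

theorem exists_eq_inr_false_of_gadLab :
    ∀ {x : GadV E}, gadLab E x 1 = true → ∃ e, x = Sum.inr (e, false)
  | Sum.inl _, h => (Bool.false_ne_true h).elim
  | Sum.inr (e, false), _ => ⟨e, rfl⟩
  | Sum.inr (_, true), h => (Bool.false_ne_true h).elim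

theorem exists_eq_inr_true_of_gadLab :
    ∀ {x : GadV E}, gadLab E x 2 = true → ∃ e, x = Sum.inr (e, true)
  | Sum.inl _, h => (Bool.false_ne_true h).elim
  | Sum.inr (_, false), h => (Bool.false_ne_true h).elim
  | Sum.inr (e, true), _ => ⟨e, rfl⟩

theorem exists_adj_of_gadEdge {x y : GadV E} (hxy : GadEdge (gadAdj E) (gadLab E) x y) :
    ∃ u v, x = Sum.inl u ∧ y = Sum.inl v ∧ E u v := by
  obtain ⟨w, z, hx, hw, hz, hy, hxw, hwz, hzy⟩ := hxy
  obtain ⟨u, rfl⟩ := exists_eq_inl_of_gadLab hx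
  obtain ⟨e, rfl⟩ := exists_eq_inr_false_of_gadLab hw
  obtain ⟨e', rfl⟩ := exists_eq_inr_true_of_gadLab hz
  obtain ⟨v, rfl⟩ := exists_eq_inl_of_gadLab hy
  rw [gadAdj_eq] at hxw hwz hzy
  obtain rfl : edgeEnds E e false = u := hxw
  obtain rfl : e = e' := hwz.1
  obtain rfl : edgeEnds E e true = v := hzy
  exact ⟨_, _, rfl, rfl, e.property⟩

theorem phi4_of_isGadLin {W : Type} {A : W → W → Prop} {lab : W → Fin 3 → Bool}
    (h : IsGadLin A lab) : phi4 A lab := by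
  obtain ⟨U, _, R, hR, f, hf, hlab⟩ := h
  have hedge {x y : W} (hxy : GadEdge A lab x y) :
      ∃ u v, f x = Sum.inl u ∧ f y = Sum.inl v ∧ R u v := by
    obtain ⟨w, z, hpath⟩ := hxy
    refine exists_adj_of_gadEdge ⟨f w, f z, ?_⟩
    simpa only [GadPath, hf, hlab] using hpath
  rintro ⟨x, y, z, hxy, hyz, hzx⟩
  obtain ⟨u, v, hu, hv, huv⟩ := hedge hxy
  obtain ⟨v', w, hv', hw, hvw⟩ := hedge hyz
  obtain ⟨w', u', hw', hu', hwu⟩ := hedge hzx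
  obtain rfl : v = v' := Sum.inl.inj (hv.symm.trans hv')
  obtain rfl : w = w' := Sum.inl.inj (hw.symm.trans hw')
  obtain rfl : u = u' := Sum.inl.inj (hu.symm.trans hu')
  exact hR.1 u (hR.2.1 u w u (hR.2.1 u v w huv hvw) hwu)

end Gadgetisation

section Reroute

variable {V : Type} {E : V → V → Prop}

/-- The gadgetisation of `E` in which the gadget of the edge `e₀` is attached the other way round:
its `v²`-node to the target of `e₀` and its `v³`-node to the source. -/
noncomputable def rerouteAdj (E : V → V → Prop) (e₀ : {p : V × V // E p.1 p.2}) :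
    GadV E → GadV E → Prop :=
  gadgetAdj (reverseEdge (edgeEnds E) e₀)

theorem rerouteAdj_iff (e₀ : {p : V × V // E p.1 p.2}) (a b : GadV E) :
    rerouteAdj E e₀ a b ↔
      ((gadAdj E a b ∧
          ¬ ((a = Sum.inl e₀.val.1 ∧ b = Sum.inr (e₀, false)) ∨
             (b = Sum.inl e₀.val.1 ∧ a = Sum.inr (e₀, false)) ∨
             (a = Sum.inr (e₀, true) ∧ b = Sum.inl e₀.val.2) ∨
             (b = Sum.inr (e₀, true) ∧ a = Sum.inl e₀.val.2))) ∨
        ((a = Sum.inl e₀.val.2 ∧ b = Sum.inr (e₀, false)) ∨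
         (b = Sum.inl e₀.val.2 ∧ a = Sum.inr (e₀, false)) ∨
         (a = Sum.inr (e₀, true) ∧ b = Sum.inl e₀.val.1) ∨
         (b = Sum.inr (e₀, true) ∧ a = Sum.inl e₀.val.1))) := by
  rw [gadAdj_eq]
  exact gadgetAdj_reverseEdge_iff a b

theorem not_phi4_rerouteAdj {e₀ : {p : V × V // E p.1 p.2}} {x : V} (hx : E e₀.val.1 x)
    (hx' : E x e₀.val.2) (hne : e₀.val.1 ≠ x) (hne' : x ≠ e₀.val.2) :
    ¬ phi4 (rerouteAdj E e₀) (gadLab E) := by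
  have hedge (e : {p : V × V // E p.1 p.2}) (he : e ≠ e₀) :
      GadEdge (rerouteAdj E e₀) (gadLab E) (Sum.inl e.val.1) (Sum.inl e.val.2) := by
    have h := gadEdge_gadgetAdj (reverseEdge (edgeEnds E) e₀) e
    rwa [reverseEdge_of_ne he] at h
  have hreversed : GadEdge (rerouteAdj E e₀) (gadLab E) (Sum.inl e₀.val.2) (Sum.inl e₀.val.1) := by
    have h := gadEdge_gadgetAdj (reverseEdge (edgeEnds E) e₀) e₀
    rwa [reverseEdge_self, reverseEdge_self] at h
  exact not_not_intro ⟨_, _, _, hedge ⟨(_, x), hx⟩ fun h => hne' (congrArg (·.val.2) h),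
    hedge ⟨(x, _), hx'⟩ fun h => hne (congrArg (·.val.1) h).symm, hreversed⟩

end Reroute

section IntNode

variable {n : ℕ}

theorem outDegree_gt_intNode (x : IntNode n) :
    outDegree (fun i j : IntNode n => i > j) x = (x.val + n).toNat := by
  have himage : Subtype.val '' {y : IntNode n | x > y} = Finset.Ico (-(n : ℤ)) x := by
    have hx := Finset.mem_Icc.1 x.property
    ext i
    simp only [Set.mem_image, Set.mem_ofPred_eq, gt_iff_lt, ← Subtype.coe_lt_coe, Subtype.exists,
      Finset.mem_coe, Finset.mem_Ico, Finset.mem_Icc]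
    grind
  rw [outDegree, ← Set.ncard_image_of_injective _ Subtype.val_injective, himage,
    Set.ncard_coe_finset, Int.card_Ico, sub_neg_eq_add]

theorem outDegree_flip_gt_intNode (x : IntNode n) :
    outDegree (flip fun i j : IntNode n => i > j) x = (n - x.val).toNat := by
  have himage : Subtype.val '' {y : IntNode n | y > x} = Finset.Ioc x.val n := by
    have hx := Finset.mem_Icc.1 x.property
    ext i
    simp only [Set.mem_image, Set.mem_ofPred_eq, gt_iff_lt, ← Subtype.coe_lt_coe, Subtype.exists,
      Finset.mem_coe, Finset.mem_Ioc, Finset.mem_Icc]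
    grind
  rw [outDegree, ← Set.ncard_image_of_injective _ Subtype.val_injective]
  unfold flip
  rw [himage, Set.ncard_coe_finset, Int.card_Ioc]

end IntNode

theorem stmt15_general {V : Type} [Fintype V] {E : V → V → Prop} (hE : IsStrictLinearOrderRel E)
    (e₀ : {p : V × V // E p.1 p.2}) {x : V} (hx : E e₀.val.1 x) (hx' : E x e₀.val.2) (ℓ c : ℕ)
    (hsource : ℓ * c ≤ outDegree (flip E) e₀.val.1) (htarget : ℓ * c ≤ outDegree E e₀.val.2) :
    IsGadLin (gadAdj E) (gadLab E) ∧ ¬ IsGadLin (rerouteAdj E e₀) (gadLab E) ∧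
      ∀ u, WL (gadAdj E) (gadLab E) c ℓ u = WL (rerouteAdj E e₀) (gadLab E) c ℓ u := by
  have hcore : ∀ b, edgeEnds E e₀ b ∈ core E c ℓ
    | false => ⟨htarget.trans (outDegree_lt_outDegree hE e₀.property).le, hsource⟩
    | true => ⟨htarget, hsource.trans (outDegree_lt_outDegree hE.flip e₀.property).le⟩
  have hphi4 : ¬ phi4 (rerouteAdj E e₀) (gadLab E) :=
    not_phi4_rerouteAdj hx hx' (fun h => hE.1 x (h ▸ hx)) fun h => hE.1 x (h ▸ hx')
  exact ⟨isGadLin_gadAdj hE, fun h => hphi4 (phi4_of_isGadLin h),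
    WL_gadAdj_eq hE (agreeOutside_reverseEdge hcore)⟩

/-- with `n = ℓ·c+1`, let `G` be the directed graph on `v_{-n},…,v_n` with
edges `(v_i,v_j)` for `i > j`, let `H = gad(G)`, and let `H'` be obtained from `H` by
rerouting the gadget of the edge `e = (v_1, v_{-1})`: the edges `{v¹_{v_1}, v²_e}` and
`{v³_e, v¹_{v_{-1}}}` are deleted and `{v¹_{v_{-1}}, v²_e}` and `{v³_e, v¹_{v_1}}` are
added.  Then `H` is isomorphic to the gadgetisation of a strict linear order, `H'` is not,
and every node receives the same `c`-bounded WL colour after `ℓ` rounds in `H` and `H'`. -/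
theorem stmt15 (ℓ c n : ℕ) (hn : n = ℓ * c + 1)
    (E : IntNode n → IntNode n → Prop)
    (hE : ∀ i j : IntNode n, E i j ↔ i.val > j.val)
    (v1 vm1 : IntNode n) (hv1 : v1.val = 1) (hvm1 : vm1.val = -1)
    (e0 : {p : IntNode n × IntNode n // E p.1 p.2}) (he0 : e0.val = (v1, vm1))
    (A' : GadV E → GadV E → Prop)
    (hA' : ∀ a b : GadV E, A' a b ↔
      ((gadAdj E a b ∧
          ¬ ((a = Sum.inl v1 ∧ b = Sum.inr (e0, false)) ∨
             (b = Sum.inl v1 ∧ a = Sum.inr (e0, false)) ∨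
             (a = Sum.inr (e0, true) ∧ b = Sum.inl vm1) ∨
             (b = Sum.inr (e0, true) ∧ a = Sum.inl vm1))) ∨
        ((a = Sum.inl vm1 ∧ b = Sum.inr (e0, false)) ∨
         (b = Sum.inl vm1 ∧ a = Sum.inr (e0, false)) ∨
         (a = Sum.inr (e0, true) ∧ b = Sum.inl v1) ∨
         (b = Sum.inr (e0, true) ∧ a = Sum.inl v1)))) :
    IsGadLin (gadAdj E) (gadLab E) ∧ ¬ IsGadLin A' (gadLab E) ∧
      ∀ u : GadV E, WL (gadAdj E) (gadLab E) c ℓ u = WL A' (gadLab E) c ℓ u := by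
  obtain ⟨rfl, rfl⟩ := Prod.mk.inj he0
  obtain rfl : E = fun i j => i > j := funext₂ fun i j => propext (hE i j)
  obtain rfl : A' = rerouteAdj _ e0 := funext₂ fun a b =>
    propext ((hA' a b).trans (rerouteAdj_iff e0 a b).symm)
  refine stmt15_general isStrictLinearOrderRel_gt e0 (x := ⟨0, by simp⟩) ?_ ?_ ℓ c ?_ ?_
  · exact Subtype.coe_lt_coe.1 (hv1 ▸ zero_lt_one)
  · exact Subtype.coe_lt_coe.1 (hvm1 ▸ neg_one_lt_zero)
  · rw [outDegree_flip_gt_intNode, hv1]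
    omega
  · rw [outDegree_gt_intNode, hvm1]
    omega
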